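/- Let ψ be a Cartan–Hadamard model function with ∫₀^∞ Θ(s)^{1/(p−1)} ds = +∞ and such that either (a) there exist γ ∈ [0,1) and ℓ ∈ (0,∞) with lim_{r→∞} r^γ·ψ′(r)/ψ(r) = ℓ, or (b) lim_{r→∞} ψ′(r)/ψ(r) = +∞ and lim_{r→∞} (ψ(r)/ψ′(r))·(d/dr) log(ψ′(r)/ψ(r)) = 0. Let u be a global radial solution. Then lim_{r→∞} (∫₀ʳ Θ(s)^{1/(p−1)} ds)^{(p−1)/(q+1−p)} · u(r) = ((p−1)/(q+1−p))^{(p−1)/(q+1−p)}. -/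

import Mathlib

open Real Filter MeasureTheory
open scoped ENNReal Topology

/-- The volume-to-surface ratio `Θ(r) = (∫₀ʳ ψ(s)^{n-1} ds) / ψ(r)^{n-1}`. -/
noncomputable def Theta (n : ℕ) (ψ : ℝ → ℝ) (r : ℝ) : ℝ :=
  (∫ s in (0:ℝ)..r, ψ s ^ (n - 1)) / ψ r ^ (n - 1)

/-- A Cartan–Hadamard model function: smooth, `ψ(0)=0`, `ψ'(0)=1`, convex on `[0,∞)`,
positive on `(0,∞)`. -/
def IsCHModel (ψ : ℝ → ℝ) : Prop :=
  ContDiff ℝ (⊤ : ℕ∞) ψ ∧ ψ 0 = 0 ∧ deriv ψ 0 = 1 ∧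
    (∀ r : ℝ, 0 ≤ r → 0 ≤ deriv (deriv ψ) r) ∧ (∀ r : ℝ, 0 < r → 0 < ψ r)

/-- A radial solution on `[0,T)` (with `T ∈ (0,∞]`) with initial datum `α`:
`u ∈ C¹([0,T))`, `u(0)=α`, `u'(0)=0`, `u>0` on `[0,T)`, and
`(ψ^{n-1} |u'|^{p-2} u')' = -ψ^{n-1} u^q` on `(0,T)`. -/
structure IsRadialSolution (n : ℕ) (p q : ℝ) (ψ : ℝ → ℝ) (T : ℝ≥0∞) (α : ℝ)
    (u : ℝ → ℝ) : Prop where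
  init : u 0 = α
  deriv_init : deriv u 0 = 0
  pos : ∀ r : ℝ, 0 ≤ r → ENNReal.ofReal r < T → 0 < u r
  diff : ∀ r : ℝ, 0 ≤ r → ENNReal.ofReal r < T → DifferentiableAt ℝ u r
  deriv_cont : ContinuousOn (deriv u) {r : ℝ | 0 ≤ r ∧ ENNReal.ofReal r < T}
  eqn : ∀ r : ℝ, 0 < r → ENNReal.ofReal r < T →
    HasDerivAt (fun s => ψ s ^ (n - 1) * |deriv u s| ^ (p - 2) * deriv u s)
      (-(ψ r ^ (n - 1) * u r ^ q)) r

/-- The energy function `F_u(r) = ((p-1)/p)|u'(r)|^p + u(r)^{q+1}/(q+1)`. -/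
noncomputable def energyF (p q : ℝ) (u : ℝ → ℝ) (r : ℝ) : ℝ :=
  (p - 1) / p * |deriv u r| ^ p + u r ^ (q + 1) / (q + 1)

/-- The Pohozaev function
`P_u(r) = (∫₀ʳ ψ^{n-1}) F_u(r) + (ψ(r)^{n-1}/(q+1)) |u'(r)|^{p-2} u'(r) u(r)`. -/
noncomputable def pohozaevP (n : ℕ) (p q : ℝ) (ψ u : ℝ → ℝ) (r : ℝ) : ℝ :=
  (∫ s in (0:ℝ)..r, ψ s ^ (n - 1)) * energyF p q u r +
    ψ r ^ (n - 1) / (q + 1) * (|deriv u r| ^ (p - 2) * deriv u r * u r)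

/-- `K(r) = ((p-1)/p + 1/(q+1)) ψ(r)^{n-1} - (n-1)(ψ'(r)/ψ(r)) ∫₀ʳ ψ^{n-1}`. -/
noncomputable def Kfun (n : ℕ) (p q : ℝ) (ψ : ℝ → ℝ) (r : ℝ) : ℝ :=
  ((p - 1) / p + 1 / (q + 1)) * ψ r ^ (n - 1) -
    ((n : ℝ) - 1) * (deriv ψ r / ψ r) * ∫ s in (0:ℝ)..r, ψ s ^ (n - 1)

/-- Condition (a): `r^γ ψ'(r)/ψ(r) → ℓ ∈ (0,∞)` for some `γ ∈ [0,1)`. -/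
def CondA (ψ : ℝ → ℝ) : Prop :=
  ∃ γ ℓ : ℝ, 0 ≤ γ ∧ γ < 1 ∧ 0 < ℓ ∧
    Tendsto (fun r : ℝ => r ^ γ * deriv ψ r / ψ r) atTop (nhds ℓ)

/-- Condition (b): `ψ'/ψ → +∞` and `(ψ/ψ') (log(ψ'/ψ))' → 0`. -/
def CondB (ψ : ℝ → ℝ) : Prop :=
  Tendsto (fun r : ℝ => deriv ψ r / ψ r) atTop atTop ∧
    Tendsto (fun r : ℝ => ψ r / deriv ψ r *
      deriv (fun s : ℝ => Real.log (deriv ψ s / ψ s)) r) atTop (nhds 0)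

/-! Write `w = -u'`, `X = Θ w / u` and `R = ψ ^ (n - 1) w ^ (p - 1) / (u ^ q ∫ ψ ^ (n - 1))`.
Since `u` decreases, integrating the equation gives `R ≥ 1`, and in the (super)critical range the
Pohozaev function is nonpositive, which keeps `X` below a constant strictly smaller than
`1 / (p - 1)`. With `c = (q + 1 - p) / (p - 1)` one has `(u ^ (-c))' = c (R Θ) ^ (1 / (p - 1))`,
so that `u ^ (-c)` dominates `∫ Θ ^ (1 / (p - 1))`. Both growth conditions force `Θ' → 0`, hence
`Θ ^ (p / (p - 1))` is negligible against that integral, that is, `Θ ^ p u ^ (q + 1 - p) → 0`. In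
the variable `t` with `dt = dr / Θ`, which is unbounded because `Θ ≤ r`, the functions `X` and `R`
satisfy first-order equations. The smallness of `Θ ^ p u ^ (q + 1 - p) = X ^ (p - 1) / R` makes
`X` decay as long as it stays away from `0`, so `X → 0`, and then the equation for `R` drives `R`
to `1`. L'Hôpital's rule now yields `u ^ (-c) ∼ c ∫ Θ ^ (1 / (p - 1))`. -/

theorem monotoneOn_Ici_of_hasDerivAt_nonneg {f f' : ℝ → ℝ} {a : ℝ}
    (hc : ContinuousOn f (Set.Ici a)) (hf : ∀ r, a < r → HasDerivAt f (f' r) r)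
    (hf' : ∀ r, a < r → 0 ≤ f' r) : MonotoneOn f (Set.Ici a) := by
  refine monotoneOn_of_hasDerivWithinAt_nonneg (convex_Ici a) hc (f' := f') ?_ ?_ <;>
    rw [interior_Ici]
  · exact fun r hr => (hf r hr).hasDerivWithinAt
  · exact hf'

theorem eventually_le_mul_of_deriv_le {f g f' g' : ℝ → ℝ} {κ κ' : ℝ}
    (hf : ∀ᶠ r in atTop, HasDerivAt f (f' r) r) (hg : ∀ᶠ r in atTop, HasDerivAt g (g' r) r)
    (hg_lim : Tendsto g atTop atTop) (hle : ∀ᶠ r in atTop, f' r ≤ κ * g' r) (hκ : κ < κ') :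
    ∀ᶠ r in atTop, f r ≤ κ' * g r := by
  obtain ⟨a, ha⟩ := eventually_atTop.1 (hf.and (hg.and hle))
  have hd : ∀ r, a ≤ r → HasDerivAt (fun s => κ * g s - f s) (κ * g' r - f' r) r :=
    fun r hr => ((ha r hr).2.1.const_mul κ).sub (ha r hr).1
  have hmono : MonotoneOn (fun s => κ * g s - f s) (Set.Ici a) :=
    monotoneOn_Ici_of_hasDerivAt_nonneg
      (fun r hr => (hd r hr).continuousAt.continuousWithinAt) (fun r hr => hd r hr.le)
      (fun r hr => sub_nonneg.2 (ha r hr.le).2.2)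
  filter_upwards [hg_lim.eventually_ge_atTop ((f a - κ * g a) / (κ' - κ)), eventually_ge_atTop a]
    with r hr har
  have h := hmono Set.self_mem_Ici har har
  rw [div_le_iff₀ (by linarith)] at hr
  linarith

theorem tendsto_div_of_tendsto_deriv_div {f g f' g' : ℝ → ℝ} {L : ℝ}
    (hf : ∀ᶠ r in atTop, HasDerivAt f (f' r) r) (hg : ∀ᶠ r in atTop, HasDerivAt g (g' r) r)
    (hg' : ∀ᶠ r in atTop, 0 < g' r) (hg_lim : Tendsto g atTop atTop)
    (h : Tendsto (fun r => f' r / g' r) atTop (𝓝 L)) :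
    Tendsto (fun r => f r / g r) atTop (𝓝 L) := by
  refine tendsto_order.2 ⟨fun b hb => ?_, fun b hb => ?_⟩
  · obtain ⟨κ, hbκ, hκ⟩ := exists_between hb
    obtain ⟨c, hbc, hcκ⟩ := exists_between hbκ
    have hle : ∀ᶠ r in atTop, -f' r ≤ -κ * g' r := by
      filter_upwards [h.eventually_const_lt hκ, hg'] with r h1 h2
      linarith [(lt_div_iff₀ h2).1 h1]
    filter_upwards [eventually_le_mul_of_deriv_le (hf.mono fun r hr => hr.neg) hg hg_lim hle
      (neg_lt_neg hcκ), hg_lim.eventually_gt_atTop 0] with r h1 h2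
    rw [Pi.neg_apply] at h1
    rw [lt_div_iff₀ h2]
    linarith [mul_lt_mul_of_pos_right hbc h2]
  · obtain ⟨κ, hκ, hκb⟩ := exists_between hb
    obtain ⟨c, hκc, hcb⟩ := exists_between hκb
    have hle : ∀ᶠ r in atTop, f' r ≤ κ * g' r := by
      filter_upwards [h.eventually_lt_const hκ, hg'] with r h1 h2
      exact ((div_lt_iff₀ h2).1 h1).le
    filter_upwards [eventually_le_mul_of_deriv_le hf hg hg_lim hle hκc,
      hg_lim.eventually_gt_atTop 0] with r h1 h2
    rw [div_lt_iff₀ h2]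
    linarith [mul_lt_mul_of_pos_right hcb h2]

theorem eventually_le_of_deriv_le_neg {f g f' g' : ℝ → ℝ} {η κ : ℝ}
    (hf : ∀ᶠ r in atTop, HasDerivAt f (f' r) r) (hg : ∀ᶠ r in atTop, HasDerivAt g (g' r) r)
    (hg' : ∀ᶠ r in atTop, 0 < g' r) (hg_lim : Tendsto g atTop atTop) (hκ : 0 < κ)
    (hle : ∀ᶠ r in atTop, η ≤ f r → f' r ≤ -κ * g' r) :
    ∀ᶠ r in atTop, f r ≤ η := by
  have hfreq : ∃ᶠ r in atTop, f r < η := by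
    intro hcon
    have hge : ∀ᶠ r in atTop, η ≤ f r := hcon.mono fun r hr => not_lt.1 hr
    have hdecay := eventually_le_mul_of_deriv_le (κ' := -κ / 2) hf hg hg_lim
      ((hle.and hge).mono fun r hr => hr.1 hr.2) (by linarith)
    obtain ⟨r, h1, h2, h3⟩ :=
      (hdecay.and ((hg_lim.eventually_gt_atTop (-2 * η / κ)).and hge)).exists
    rw [div_lt_iff₀ hκ] at h2
    linarith
  obtain ⟨a, ha⟩ := eventually_atTop.1 (hf.and (hg'.and hle))
  obtain ⟨b, hbη, hab⟩ := (hfreq.and_eventually (eventually_ge_atTop a)).exists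
  filter_upwards [eventually_ge_atTop b] with r hr
  refine image_le_of_deriv_right_lt_deriv_boundary (f := f) (f' := f') (a := b) (b := r)
    (B := fun _ => η) (B' := fun _ => 0) ?_ ?_ hbη.le (fun x => hasDerivAt_const x η) ?_
    ⟨hr, le_rfl⟩
  · exact fun x hx => (ha x (hab.trans hx.1)).1.continuousAt.continuousWithinAt
  · exact fun x hx => (ha x (hab.trans hx.1)).1.hasDerivWithinAt
  · intro x hx hxη
    obtain ⟨-, hg'x, hlex⟩ := ha x (hab.trans hx.1)
    linarith [mul_pos hκ hg'x, hlex hxη.ge]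

/-- The logarithmic slope `-Θ u' / u` of a decreasing function `u`, where `w` stands for `-u'`. -/
noncomputable def logSlope (Θ u w : ℝ → ℝ) (r : ℝ) : ℝ :=
  Θ r * w r / u r

/-- The ratio of the flux `A w ^ (p - 1)` to `V u ^ q`, where `A` is a weight with primitive `V`.
Only `Θ = V / A` enters. -/
noncomputable def fluxRatio (p q : ℝ) (Θ u w : ℝ → ℝ) (r : ℝ) : ℝ :=
  w r ^ (p - 1) / (Θ r * u r ^ q)

/-- At the point `r`, the function `u` is positive and decreasing with slope `u' = -w`, and it
solves `(A w ^ (p - 1))' = A u ^ q` for a weight `A` with primitive `V`, expressed through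
`Θ = V / A`. The weight does not appear because `A' / A = (1 - Θ') / Θ`. -/
structure IsRadialFlowAt (p q : ℝ) (Θ u w : ℝ → ℝ) (r : ℝ) : Prop where
  theta_pos : 0 < Θ r
  u_pos : 0 < u r
  w_pos : 0 < w r
  differentiableAt_theta : DifferentiableAt ℝ Θ r
  hasDerivAt_u : HasDerivAt u (-w r) r
  hasDerivAt_w :
    HasDerivAt w (w r / (p - 1) * (u r ^ q / w r ^ (p - 1) - (1 - deriv Θ r) / Θ r)) r

namespace IsRadialFlowAt

variable {p q r : ℝ} {Θ u w : ℝ → ℝ}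

theorem logSlope_pos (h : IsRadialFlowAt p q Θ u w r) : 0 < logSlope Θ u w r :=
  div_pos (mul_pos h.theta_pos h.w_pos) h.u_pos

theorem fluxRatio_pos (h : IsRadialFlowAt p q Θ u w r) : 0 < fluxRatio p q Θ u w r :=
  div_pos (rpow_pos_of_pos h.w_pos _) (mul_pos h.theta_pos (rpow_pos_of_pos h.u_pos _))

theorem hasDerivAt_logSlope (h : IsRadialFlowAt p q Θ u w r) (hp : p ≠ 1) :
    HasDerivAt (logSlope Θ u w)
      (logSlope Θ u w r / Θ r * ((p * deriv Θ r + (fluxRatio p q Θ u w r)⁻¹ - 1) / (p - 1) +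
        logSlope Θ u w r)) r := by
  have hΘ := h.theta_pos
  have hu := h.u_pos
  have hw := rpow_pos_of_pos h.w_pos (p - 1)
  have hp' : p - 1 ≠ 0 := sub_ne_zero.2 hp
  refine ((h.differentiableAt_theta.hasDerivAt.mul h.hasDerivAt_w).div
    h.hasDerivAt_u hu.ne').congr_deriv ?_
  simp only [logSlope, fluxRatio, Pi.mul_apply]
  field_simp
  ring

theorem hasDerivAt_fluxRatio (h : IsRadialFlowAt p q Θ u w r) (hp : p ≠ 1) :
    HasDerivAt (fluxRatio p q Θ u w)
      ((1 - (1 - q * logSlope Θ u w r) * fluxRatio p q Θ u w r) / Θ r) r := by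
  have hΘ := h.theta_pos
  have hu := h.u_pos
  have hw := h.w_pos
  have huq := rpow_pos_of_pos hu q
  have hp' : p - 1 ≠ 0 := sub_ne_zero.2 hp
  refine ((h.hasDerivAt_w.rpow_const (p := p - 1) (Or.inl hw.ne')).div
    (h.differentiableAt_theta.hasDerivAt.mul
      (h.hasDerivAt_u.rpow_const (p := q) (Or.inl hu.ne')))
    (mul_pos hΘ huq).ne').congr_deriv ?_
  simp only [logSlope, fluxRatio, Pi.mul_apply]
  rw [rpow_sub_one hu.ne', rpow_sub_one hw.ne' (p - 1)]
  field_simp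
  ring

theorem inv_fluxRatio_mul_logSlope_rpow (h : IsRadialFlowAt p q Θ u w r) :
    (fluxRatio p q Θ u w r)⁻¹ * logSlope Θ u w r ^ (p - 1) = Θ r ^ p * u r ^ (q + 1 - p) := by
  have hΘ := h.theta_pos
  have hu := h.u_pos
  have hw := h.w_pos
  rw [logSlope, fluxRatio, div_rpow (mul_pos hΘ hw).le hu.le, mul_rpow hΘ.le hw.le,
    rpow_sub_one hΘ.ne', show q + 1 - p = q - (p - 1) by ring, rpow_sub hu q (p - 1)]
  field_simp

theorem inv_fluxRatio_le (h : IsRadialFlowAt p q Θ u w r) (hp : 1 ≤ p) {η δ : ℝ} (hη : 0 < η)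
    (hηX : η ≤ logSlope Θ u w r) (hδ : Θ r ^ p * u r ^ (q + 1 - p) ≤ δ * η ^ (p - 1)) :
    (fluxRatio p q Θ u w r)⁻¹ ≤ δ := by
  have hR := h.fluxRatio_pos
  refine le_of_mul_le_mul_right (le_trans ?_ (h.inv_fluxRatio_mul_logSlope_rpow.trans_le hδ))
    (rpow_pos_of_pos hη (p - 1))
  exact mul_le_mul_of_nonneg_left (rpow_le_rpow hη.le hηX (sub_nonneg.2 hp)) (inv_nonneg.2 hR.le)

theorem hasDerivAt_rpow_neg (h : IsRadialFlowAt p q Θ u w r) (hp : p ≠ 1) :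
    HasDerivAt (fun s => u s ^ (-((q + 1 - p) / (p - 1))))
      ((q + 1 - p) / (p - 1) * fluxRatio p q Θ u w r ^ (1 / (p - 1)) * Θ r ^ (1 / (p - 1))) r := by
  have hΘ := h.theta_pos
  have hu := h.u_pos
  have hw := h.w_pos
  have hp' : p - 1 ≠ 0 := sub_ne_zero.2 hp
  have hexp : -((q + 1 - p) / (p - 1)) - 1 = -(q * (1 / (p - 1))) := by
    field_simp
    ring
  have hflux : fluxRatio p q Θ u w r ^ (1 / (p - 1)) * Θ r ^ (1 / (p - 1)) =
      w r * u r ^ (-((q + 1 - p) / (p - 1)) - 1) := by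
    rw [← mul_rpow h.fluxRatio_pos.le hΘ.le, fluxRatio, div_mul_eq_mul_div, mul_comm (Θ r),
      mul_div_mul_right _ _ hΘ.ne', div_rpow (rpow_nonneg hw.le _) (rpow_nonneg hu.le _),
      ← rpow_mul hw.le, mul_one_div_cancel hp', rpow_one, ← rpow_mul hu.le, hexp,
      rpow_neg hu.le, div_eq_mul_inv]
  refine (h.hasDerivAt_u.rpow_const (Or.inl hu.ne')).congr_deriv ?_
  rw [mul_assoc ((q + 1 - p) / (p - 1)), hflux]
  ring

end IsRadialFlowAt

section Asymptotics

variable {p q : ℝ} {Θ u w H : ℝ → ℝ}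

theorem isLittleO_rpow_of_deriv_le (hp : 1 < p) (hΘ : ∀ᶠ r in atTop, 0 < Θ r)
    (hΘd : ∀ᶠ r in atTop, DifferentiableAt ℝ Θ r)
    (hΘ' : ∀ ε > 0, ∀ᶠ r in atTop, deriv Θ r ≤ ε)
    (hH : ∀ᶠ r in atTop, HasDerivAt H (Θ r ^ (1 / (p - 1))) r) (hH_lim : Tendsto H atTop atTop) :
    (fun r => Θ r ^ (p / (p - 1))) =o[atTop] H := by
  have hp' : 0 < p - 1 := sub_pos.2 hp
  have hexp : p / (p - 1) - 1 = 1 / (p - 1) := by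
    field_simp
    ring
  refine Asymptotics.isLittleO_iff.2 fun ε hε => ?_
  have hderiv : ∀ᶠ r in atTop, HasDerivAt (fun r => Θ r ^ (p / (p - 1)))
      (deriv Θ r * (p / (p - 1)) * Θ r ^ (p / (p - 1) - 1)) r := by
    filter_upwards [hΘ, hΘd] with r hr hd
    exact hd.hasDerivAt.rpow_const (Or.inl hr.ne')
  have hle : ∀ᶠ r in atTop,
      deriv Θ r * (p / (p - 1)) * Θ r ^ (p / (p - 1) - 1) ≤ ε / 2 * Θ r ^ (1 / (p - 1)) := by
    filter_upwards [hΘ, hΘ' (ε / 2 / (p / (p - 1))) (by positivity)] with r hr h1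
    rw [hexp]
    gcongr
    exact (le_div_iff₀ (by positivity)).1 h1
  filter_upwards [hΘ, eventually_le_mul_of_deriv_le hderiv hH hH_lim hle (half_lt_self hε),
    hH_lim.eventually_ge_atTop 0] with r hr h1 h2
  rwa [norm_of_nonneg (rpow_nonneg hr.le _), norm_of_nonneg h2]

theorem eventually_le_self_of_deriv_le (hΘd : ∀ᶠ r in atTop, DifferentiableAt ℝ Θ r)
    {κ : ℝ} (hκ : κ < 1) (hΘ' : ∀ᶠ r in atTop, deriv Θ r ≤ κ) : ∀ᶠ r in atTop, Θ r ≤ r := by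
  simpa using eventually_le_mul_of_deriv_le (hΘd.mono fun r hr => hr.hasDerivAt)
    (Eventually.of_forall hasDerivAt_id) tendsto_id (by simpa using hΘ') hκ

theorem isBigO_rpow_neg_of_one_le_fluxRatio (hp : 1 < p) (hqp : p < q + 1)
    (h : ∀ᶠ r in atTop, IsRadialFlowAt p q Θ u w r)
    (hH : ∀ᶠ r in atTop, HasDerivAt H (Θ r ^ (1 / (p - 1))) r) (hH_lim : Tendsto H atTop atTop)
    (hR : ∀ᶠ r in atTop, 1 ≤ fluxRatio p q Θ u w r) :
    H =O[atTop] fun r => u r ^ (-((q + 1 - p) / (p - 1))) := by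
  have hp' : 0 < p - 1 := sub_pos.2 hp
  have hc : 0 < (q + 1 - p) / (p - 1) := div_pos (by linarith) hp'
  have hle : ∀ᶠ r in atTop,
      -((q + 1 - p) / (p - 1) * fluxRatio p q Θ u w r ^ (1 / (p - 1)) * Θ r ^ (1 / (p - 1))) ≤
        -((q + 1 - p) / (p - 1)) * Θ r ^ (1 / (p - 1)) := by
    filter_upwards [h, hR] with r hr h1
    have hΘ := hr.theta_pos
    rw [neg_mul, neg_le_neg_iff]
    gcongr
    exact le_mul_of_one_le_right hc.le (one_le_rpow h1 (by positivity))
  refine Asymptotics.IsBigO.of_bound ((q + 1 - p) / (p - 1) / 2)⁻¹ ?_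
  filter_upwards [h, hH_lim.eventually_ge_atTop 0,
    eventually_le_mul_of_deriv_le (h.mono fun r hr => (hr.hasDerivAt_rpow_neg hp.ne').neg) hH
      hH_lim hle (neg_lt_neg (half_lt_self hc))] with r hr h1 h2
  rw [norm_of_nonneg h1, norm_of_nonneg (rpow_nonneg hr.u_pos.le _), le_inv_mul_iff₀ (half_pos hc)]
  simpa using h2

theorem tendsto_theta_rpow_mul_rpow (hp : 1 < p) (hqp : p < q + 1)
    (h : ∀ᶠ r in atTop, IsRadialFlowAt p q Θ u w r)
    (hΘ' : ∀ ε > 0, ∀ᶠ r in atTop, deriv Θ r ≤ ε)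
    (hH : ∀ᶠ r in atTop, HasDerivAt H (Θ r ^ (1 / (p - 1))) r) (hH_lim : Tendsto H atTop atTop)
    (hR : ∀ᶠ r in atTop, 1 ≤ fluxRatio p q Θ u w r) :
    Tendsto (fun r => Θ r ^ p * u r ^ (q + 1 - p)) atTop (𝓝 0) := by
  have hp' : 0 < p - 1 := sub_pos.2 hp
  have hlittle := (isLittleO_rpow_of_deriv_le hp (h.mono fun r hr => hr.theta_pos)
    (h.mono fun r hr => hr.differentiableAt_theta) hΘ' hH hH_lim).trans_isBigO
    (isBigO_rpow_neg_of_one_le_fluxRatio hp hqp h hH hH_lim hR)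
  have hlim := hlittle.tendsto_div_nhds_zero.rpow_const (p := p - 1) (Or.inr hp'.le)
  rw [zero_rpow hp'.ne'] at hlim
  refine hlim.congr' (h.mono fun r hr => ?_)
  have hΘ := hr.theta_pos
  have hu := hr.u_pos
  rw [rpow_neg hu.le, div_inv_eq_mul, mul_rpow (by positivity) (by positivity), ← rpow_mul hΘ.le,
    ← rpow_mul hu.le, div_mul_cancel₀ _ hp'.ne', div_mul_cancel₀ _ hp'.ne']

theorem tendsto_logSlope {B : ℝ} (hp : 1 < p) (hB : B < 1 / (p - 1))
    (h : ∀ᶠ r in atTop, IsRadialFlowAt p q Θ u w r)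
    (hΘ' : ∀ ε > 0, ∀ᶠ r in atTop, deriv Θ r ≤ ε)
    (hZ : Tendsto (fun r => Θ r ^ p * u r ^ (q + 1 - p)) atTop (𝓝 0))
    (hX : ∀ᶠ r in atTop, logSlope Θ u w r ≤ B) :
    Tendsto (logSlope Θ u w) atTop (𝓝 0) := by
  have hp' : 0 < p - 1 := sub_pos.2 hp
  obtain ⟨κ, hκ, hBκ⟩ : ∃ κ > 0, B = 1 / (p - 1) - 2 * κ :=
    ⟨(1 / (p - 1) - B) / 2, by linarith, by ring⟩
  refine tendsto_order.2 ⟨fun b hb => h.mono fun r hr => hb.trans hr.logSlope_pos, fun b hb => ?_⟩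
  obtain ⟨η, hη, hηb⟩ := exists_between hb
  refine Eventually.mono ?_ fun r (hr : logSlope Θ u w r ≤ η) => hr.trans_lt hηb
  refine eventually_le_of_deriv_le_neg (κ := κ * η)
    (h.mono fun r hr => hr.hasDerivAt_logSlope hp.ne')
    ((eventually_ne_atTop 0).mono fun r hr => hasDerivAt_log hr)
    ((eventually_gt_atTop 0).mono fun r hr => inv_pos.2 hr) tendsto_log_atTop (by positivity) ?_
  filter_upwards [h, hX,
    eventually_le_self_of_deriv_le (h.mono fun r hr => hr.differentiableAt_theta) one_half_lt_one
      (hΘ' (1 / 2) one_half_pos),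
    hΘ' (κ * (p - 1) / (2 * p)) (by positivity),
    hZ.eventually_le_const (show 0 < κ * (p - 1) / 2 * η ^ (p - 1) by positivity)]
    with r hr hXB hΘr hΘε hZε hηX
  have hΘ := hr.theta_pos
  have hX0 := hr.logSlope_pos
  have hRinv := hr.inv_fluxRatio_le hp.le hη hηX hZε
  have hpΘ : p * deriv Θ r ≤ κ * (p - 1) / 2 := by
    rw [le_div_iff₀ (by positivity)] at hΘε
    linarith
  have hbracket : (p * deriv Θ r + (fluxRatio p q Θ u w r)⁻¹ - 1) / (p - 1) +
      logSlope Θ u w r ≤ -κ := by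
    have hnum : (p * deriv Θ r + (fluxRatio p q Θ u w r)⁻¹ - 1) / (p - 1) ≤ κ - 1 / (p - 1) := by
      rw [div_le_iff₀ hp', sub_mul, div_mul_cancel₀ _ hp'.ne']
      linarith
    linarith
  calc logSlope Θ u w r / Θ r * ((p * deriv Θ r + (fluxRatio p q Θ u w r)⁻¹ - 1) / (p - 1) +
        logSlope Θ u w r)
      ≤ logSlope Θ u w r / Θ r * -κ := by
        gcongr
    _ = -(logSlope Θ u w r / Θ r * κ) := by ring
    _ ≤ -(η / r * κ) := by gcongr
    _ = -(κ * η) * r⁻¹ := by ring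

theorem tendsto_fluxRatio (hp : p ≠ 1) (hq : 0 < q)
    (h : ∀ᶠ r in atTop, IsRadialFlowAt p q Θ u w r) (hΘr : ∀ᶠ r in atTop, Θ r ≤ r)
    (hR : ∀ᶠ r in atTop, 1 ≤ fluxRatio p q Θ u w r)
    (hX : Tendsto (logSlope Θ u w) atTop (𝓝 0)) :
    Tendsto (fluxRatio p q Θ u w) atTop (𝓝 1) := by
  refine tendsto_order.2 ⟨fun b hb => hR.mono fun r hr => hb.trans_le hr, fun b hb => ?_⟩
  obtain ⟨η, hη, hηb⟩ := exists_between (sub_pos.2 hb)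
  refine Eventually.mono ?_ fun r (hr : fluxRatio p q Θ u w r ≤ 1 + η) =>
    hr.trans_lt (lt_sub_iff_add_lt'.1 hηb)
  refine eventually_le_of_deriv_le_neg (κ := η / 2)
    (h.mono fun r hr => hr.hasDerivAt_fluxRatio hp)
    ((eventually_ne_atTop 0).mono fun r hr => hasDerivAt_log hr)
    ((eventually_gt_atTop 0).mono fun r hr => inv_pos.2 hr) tendsto_log_atTop (by positivity) ?_
  filter_upwards [h, hΘr,
    hX.eventually_le_const (show 0 < η / (2 * (1 + η)) / q by positivity)]
    with r hr hΘr hXr hRη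
  have hΘ := hr.theta_pos
  rw [le_div_iff₀' hq] at hXr
  have hprod : 1 + η / 2 ≤ (1 - q * logSlope Θ u w r) * fluxRatio p q Θ u w r :=
    calc 1 + η / 2 = (1 - η / (2 * (1 + η))) * (1 + η) := by field_simp; ring
      _ ≤ (1 - q * logSlope Θ u w r) * fluxRatio p q Θ u w r := by
        have : η / (2 * (1 + η)) ≤ 1 := (div_le_one (by positivity)).2 (by linarith)
        gcongr
        linarith
  calc (1 - (1 - q * logSlope Θ u w r) * fluxRatio p q Θ u w r) / Θ r
      ≤ -(η / 2) / Θ r := by gcongr; linarith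
    _ = -(η / 2 / Θ r) := neg_div _ _
    _ ≤ -(η / 2 / r) := by gcongr
    _ = -(η / 2) * r⁻¹ := by ring

theorem tendsto_rpow_mul_of_tendsto_fluxRatio (hp : 1 < p) (hqp : p < q + 1)
    (h : ∀ᶠ r in atTop, IsRadialFlowAt p q Θ u w r)
    (hH : ∀ᶠ r in atTop, HasDerivAt H (Θ r ^ (1 / (p - 1))) r) (hH_lim : Tendsto H atTop atTop)
    (hR : Tendsto (fluxRatio p q Θ u w) atTop (𝓝 1)) :
    Tendsto (fun r => H r ^ ((p - 1) / (q + 1 - p)) * u r) atTop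
      (𝓝 (((p - 1) / (q + 1 - p)) ^ ((p - 1) / (q + 1 - p)))) := by
  have hc : 0 < (q + 1 - p) / (p - 1) := div_pos (by linarith) (by linarith)
  have hderiv : Tendsto (fun r => (q + 1 - p) / (p - 1) * fluxRatio p q Θ u w r ^ (1 / (p - 1)) *
      Θ r ^ (1 / (p - 1)) / Θ r ^ (1 / (p - 1))) atTop (𝓝 ((q + 1 - p) / (p - 1))) := by
    have hlim := (hR.rpow_const (p := 1 / (p - 1)) (Or.inl one_ne_zero)).const_mul
      ((q + 1 - p) / (p - 1))
    rw [one_rpow, mul_one] at hlim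
    refine hlim.congr' (h.mono fun r hr => ?_)
    exact (mul_div_cancel_right₀ _ (rpow_pos_of_pos hr.theta_pos _).ne').symm
  have hratio := tendsto_div_of_tendsto_deriv_div
    (h.mono fun r hr => hr.hasDerivAt_rpow_neg hp.ne') hH
    (h.mono fun r hr => rpow_pos_of_pos hr.theta_pos _) hH_lim hderiv
  rw [← inv_div (q + 1 - p)]
  refine ((hratio.inv₀ hc.ne').rpow_const (Or.inl (inv_pos.2 hc).ne')).congr' ?_
  filter_upwards [h, hH_lim.eventually_gt_atTop 0] with r hr hHr
  have hu := hr.u_pos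
  rw [inv_div, rpow_neg hu.le, div_inv_eq_mul, mul_rpow hHr.le (by positivity), ← rpow_mul hu.le,
    mul_inv_cancel₀ hc.ne', rpow_one]

end Asymptotics

namespace IsCHModel

variable {ψ : ℝ → ℝ} {n : ℕ} {r : ℝ}

theorem hasDerivAt (hψ : IsCHModel ψ) (r : ℝ) : HasDerivAt ψ (deriv ψ r) r :=
  (hψ.1.differentiable (by simp) r).hasDerivAt

theorem continuous (hψ : IsCHModel ψ) : Continuous ψ :=
  hψ.1.continuous

theorem hasDerivAt_deriv (hψ : IsCHModel ψ) (r : ℝ) :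
    HasDerivAt (deriv ψ) (deriv (deriv ψ) r) r :=
  ((contDiff_infty_iff_deriv.1 hψ.1).2.differentiable (by simp) r).hasDerivAt

theorem continuous_deriv (hψ : IsCHModel ψ) : Continuous (deriv ψ) :=
  continuous_iff_continuousAt.2 fun r => (hψ.hasDerivAt_deriv r).continuousAt

theorem pos (hψ : IsCHModel ψ) (hr : 0 < r) : 0 < ψ r :=
  hψ.2.2.2.2 r hr

theorem nonneg (hψ : IsCHModel ψ) (hr : 0 ≤ r) : 0 ≤ ψ r := by
  rcases hr.eq_or_lt with rfl | hr
  · exact hψ.2.1.ge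
  · exact (hψ.pos hr).le

theorem monotoneOn_deriv (hψ : IsCHModel ψ) : MonotoneOn (deriv ψ) (Set.Ici 0) :=
  monotoneOn_Ici_of_hasDerivAt_nonneg hψ.continuous_deriv.continuousOn
    (fun s _ => hψ.hasDerivAt_deriv s) fun s hs => hψ.2.2.2.1 s hs.le

theorem one_le_deriv (hψ : IsCHModel ψ) (hr : 0 ≤ r) : 1 ≤ deriv ψ r :=
  hψ.2.2.1.symm.trans_le (hψ.monotoneOn_deriv Set.self_mem_Ici hr hr)

theorem deriv_pos (hψ : IsCHModel ψ) (hr : 0 ≤ r) : 0 < deriv ψ r :=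
  zero_lt_one.trans_le (hψ.one_le_deriv hr)

theorem monotoneOn (hψ : IsCHModel ψ) : MonotoneOn ψ (Set.Ici 0) :=
  monotoneOn_Ici_of_hasDerivAt_nonneg hψ.continuous.continuousOn (fun s _ => hψ.hasDerivAt s)
    fun _ hs => (hψ.deriv_pos hs.le).le

theorem self_le (hψ : IsCHModel ψ) (hr : 0 ≤ r) : r ≤ ψ r := by
  have hmono : MonotoneOn (fun s => ψ s - s) (Set.Ici 0) :=
    monotoneOn_Ici_of_hasDerivAt_nonneg (hψ.continuous.sub continuous_id).continuousOn
      (fun s _ => (hψ.hasDerivAt s).sub (hasDerivAt_id s))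
      fun s hs => sub_nonneg.2 (hψ.one_le_deriv hs.le)
  simpa [hψ.2.1] using hmono Set.self_mem_Ici hr hr

theorem hasDerivAt_volume (hψ : IsCHModel ψ) (n : ℕ) (r : ℝ) :
    HasDerivAt (fun r => ∫ s in (0:ℝ)..r, ψ s ^ (n - 1)) (ψ r ^ (n - 1)) r :=
  ((hψ.continuous.pow (n - 1)).integral_hasStrictDerivAt 0 r).hasDerivAt

theorem continuous_volume (hψ : IsCHModel ψ) (n : ℕ) :
    Continuous fun r => ∫ s in (0:ℝ)..r, ψ s ^ (n - 1) :=
  continuous_iff_continuousAt.2 fun r => (hψ.hasDerivAt_volume n r).continuousAt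

theorem volume_pos (hψ : IsCHModel ψ) (n : ℕ) (hr : 0 < r) :
    0 < ∫ s in (0:ℝ)..r, ψ s ^ (n - 1) :=
  intervalIntegral.intervalIntegral_pos_of_pos_on
    ((hψ.continuous.pow (n - 1)).intervalIntegrable 0 r) (fun _ hs => pow_pos (hψ.pos hs.1) _) hr

theorem tendsto_volume (hψ : IsCHModel ψ) (n : ℕ) :
    Tendsto (fun r => ∫ s in (0:ℝ)..r, ψ s ^ (n - 1)) atTop atTop := by
  have hpow : Tendsto (fun r : ℝ => r ^ (n - 1 + 1) / (↑(n - 1) + 1)) atTop atTop :=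
    (tendsto_pow_atTop (Nat.succ_ne_zero _)).atTop_div_const (by positivity)
  refine tendsto_atTop_mono' _ ?_ hpow
  filter_upwards [eventually_ge_atTop 0] with r hr
  calc r ^ (n - 1 + 1) / (↑(n - 1) + 1) = ∫ s in (0:ℝ)..r, s ^ (n - 1) := by simp
    _ ≤ ∫ s in (0:ℝ)..r, ψ s ^ (n - 1) :=
      intervalIntegral.integral_mono_on hr ((continuous_pow _).intervalIntegrable _ _)
        ((hψ.continuous.pow _).intervalIntegrable _ _)
        fun s hs => pow_le_pow_left₀ hs.1 (hψ.self_le hs.1) _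

theorem hasDerivAt_area (hψ : IsCHModel ψ) (hn : n ≠ 0) (hr : 0 < r) :
    HasDerivAt (fun s => ψ s ^ (n - 1)) ((n - 1) * (deriv ψ r / ψ r) * ψ r ^ (n - 1)) r := by
  have hpos := hψ.pos hr
  obtain ⟨k, rfl⟩ := Nat.exists_eq_succ_of_ne_zero hn
  refine ((hψ.hasDerivAt r).pow k).congr_deriv ?_
  cases k with
  | zero => simp
  | succ k =>
    push_cast [Nat.succ_eq_add_one, Nat.add_sub_cancel]
    field_simp
    ring

theorem pow_le_deriv_mul_volume (hψ : IsCHModel ψ) (hn : n ≠ 0) (hr : 0 ≤ r) :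
    ψ r ^ n ≤ n * deriv ψ r * ∫ s in (0:ℝ)..r, ψ s ^ (n - 1) := by
  have hcont : Continuous fun s => n * ψ s ^ (n - 1) * deriv ψ s :=
    (continuous_const.mul (hψ.continuous.pow _)).mul hψ.continuous_deriv
  calc ψ r ^ n = ∫ s in (0:ℝ)..r, n * ψ s ^ (n - 1) * deriv ψ s := by
        rw [intervalIntegral.integral_eq_sub_of_hasDerivAt (fun s _ => (hψ.hasDerivAt s).pow n)
          (hcont.intervalIntegrable _ _)]
        simp [hψ.2.1, hn]
    _ ≤ ∫ s in (0:ℝ)..r, n * deriv ψ r * ψ s ^ (n - 1) := by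
        refine intervalIntegral.integral_mono_on hr (hcont.intervalIntegrable _ _)
          ((continuous_const.mul (hψ.continuous.pow _)).intervalIntegrable _ _) fun s hs => ?_
        rw [mul_right_comm]
        have hpow := pow_nonneg (hψ.nonneg hs.1) (n - 1)
        gcongr
        exact hψ.monotoneOn_deriv hs.1 hr hs.2
    _ = n * deriv ψ r * ∫ s in (0:ℝ)..r, ψ s ^ (n - 1) :=
        intervalIntegral.integral_const_mul _ _

theorem Kfun_nonpos {p q : ℝ} (hψ : IsCHModel ψ) (hn : n ≠ 0)
    (hpq : (p - 1) / p + 1 / (q + 1) ≤ ((n : ℝ) - 1) / n) (hr : 0 < r) : Kfun n p q ψ r ≤ 0 := by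
  have hpos := hψ.pos hr
  have hn1 : (1 : ℝ) ≤ n := by exact_mod_cast Nat.one_le_iff_ne_zero.2 hn
  refine sub_nonpos.2 ?_
  calc ((p - 1) / p + 1 / (q + 1)) * ψ r ^ (n - 1) ≤ ((n : ℝ) - 1) / n * ψ r ^ (n - 1) := by gcongr
    _ = ((n : ℝ) - 1) / (n * ψ r) * ψ r ^ n := by
        rw [← pow_sub_one_mul hn (ψ r)]
        field_simp
    _ ≤ ((n : ℝ) - 1) / (n * ψ r) * (n * deriv ψ r * ∫ s in (0:ℝ)..r, ψ s ^ (n - 1)) :=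
        mul_le_mul_of_nonneg_left (hψ.pow_le_deriv_mul_volume hn hr.le)
          (div_nonneg (sub_nonneg.2 hn1) (by positivity))
    _ = ((n : ℝ) - 1) * (deriv ψ r / ψ r) * ∫ s in (0:ℝ)..r, ψ s ^ (n - 1) := by
        field_simp

theorem Theta_pos (hψ : IsCHModel ψ) (n : ℕ) (hr : 0 < r) : 0 < Theta n ψ r :=
  div_pos (hψ.volume_pos n hr) (pow_pos (hψ.pos hr) _)

theorem Theta_le_self (hψ : IsCHModel ψ) (n : ℕ) (hr : 0 < r) : Theta n ψ r ≤ r := by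
  refine (div_le_iff₀ (pow_pos (hψ.pos hr) _)).2 ?_
  calc ∫ s in (0:ℝ)..r, ψ s ^ (n - 1) ≤ ∫ _ in (0:ℝ)..r, ψ r ^ (n - 1) :=
        intervalIntegral.integral_mono_on hr.le ((hψ.continuous.pow _).intervalIntegrable _ _)
          intervalIntegrable_const fun s hs =>
            pow_le_pow_left₀ (hψ.nonneg hs.1) (hψ.monotoneOn hs.1 hr.le hs.2) _
    _ = r * ψ r ^ (n - 1) := by simp

theorem hasDerivAt_Theta (hψ : IsCHModel ψ) (hn : n ≠ 0) (hr : 0 < r) :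
    HasDerivAt (Theta n ψ) (1 - (n - 1) * (deriv ψ r / ψ r) * Theta n ψ r) r := by
  have harea := pow_pos (hψ.pos hr) (n - 1)
  refine ((hψ.hasDerivAt_volume n r).div (hψ.hasDerivAt_area hn hr) harea.ne').congr_deriv ?_
  rw [Theta]
  field_simp

theorem continuousOn_Theta (hψ : IsCHModel ψ) (n : ℕ) : ContinuousOn (Theta n ψ) (Set.Ici 0) := by
  have h0 : Theta n ψ 0 = 0 := by simp [Theta]
  intro r hr
  rcases (show 0 ≤ r from hr).eq_or_lt with rfl | hr
  · rw [← continuousWithinAt_Ioi_iff_Ici, ContinuousWithinAt, h0]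
    refine tendsto_of_tendsto_of_tendsto_of_le_of_le' tendsto_const_nhds
      (tendsto_id.mono_left nhdsWithin_le_nhds) ?_ ?_ <;>
    filter_upwards [self_mem_nhdsWithin] with s hs
    · exact (hψ.Theta_pos n hs).le
    · exact hψ.Theta_le_self n hs
  · exact ((hψ.hasDerivAt_volume n r).continuousAt.div
      (hψ.continuous.pow (n - 1)).continuousAt (pow_pos (hψ.pos hr) _).ne').continuousWithinAt

theorem hasDerivAt_integral_Theta_rpow (hψ : IsCHModel ψ) (n : ℕ) {β : ℝ} (hβ : 0 ≤ β)
    (hr : 0 < r) :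
    HasDerivAt (fun r => ∫ s in (0:ℝ)..r, Theta n ψ s ^ β) (Theta n ψ r ^ β) r := by
  have hc : ContinuousOn (fun s => Theta n ψ s ^ β) (Set.Ici 0) :=
    (hψ.continuousOn_Theta n).rpow_const fun _ _ => Or.inr hβ
  refine intervalIntegral.integral_hasDerivAt_right (hc.mono ?_).intervalIntegrable
    ((hc.mono Set.Ioi_subset_Ici_self).stronglyMeasurableAtFilter isOpen_Ioi r hr)
    (hc.continuousAt (Ici_mem_nhds hr))
  rw [Set.uIcc_of_le hr.le]
  exact Set.Icc_subset_Ici_self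

theorem tendsto_deriv_Theta {ξ ξ' : ℝ → ℝ} (hψ : IsCHModel ψ) (hn : 2 ≤ n)
    (hξ : ∀ᶠ r in atTop, HasDerivAt ξ (ξ' r) r) (hξ' : Tendsto ξ' atTop (𝓝 0))
    (hψξ : Tendsto (fun r => deriv ψ r / ψ r * ξ r) atTop (𝓝 1)) :
    Tendsto (deriv (Theta n ψ)) atTop (𝓝 0) := by
  -- L'Hôpital applied to `ψ ^ (n - 1) ξ / ∫ ψ ^ (n - 1)` gives `(n - 1) Θ / ξ → 1`.
  have hn1 : (0 : ℝ) < n - 1 := sub_pos.2 (by exact_mod_cast hn)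
  have hn0 : n ≠ 0 := by omega
  have hderiv : Tendsto (fun r => ((n - 1) * (deriv ψ r / ψ r) * ψ r ^ (n - 1) * ξ r +
      ψ r ^ (n - 1) * ξ' r) / ψ r ^ (n - 1)) atTop (𝓝 (n - 1)) := by
    have hlim := (hψξ.const_mul ((n : ℝ) - 1)).add hξ'
    rw [mul_one, add_zero] at hlim
    refine hlim.congr' ((eventually_gt_atTop 0).mono fun r hr => ?_)
    have hpos := pow_pos (hψ.pos hr) (n - 1)
    field_simp
  have hratio := tendsto_div_of_tendsto_deriv_div
    (((eventually_gt_atTop 0).and hξ).mono fun r hr => (hψ.hasDerivAt_area hn0 hr.1).mul hr.2)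
    (Eventually.of_forall (hψ.hasDerivAt_volume n))
    ((eventually_gt_atTop 0).mono fun r hr => pow_pos (hψ.pos hr) _) (hψ.tendsto_volume n) hderiv
  have hlim := (((hratio.inv₀ hn1.ne').const_mul ((n : ℝ) - 1)).mul hψξ).const_sub 1
  rw [mul_inv_cancel₀ hn1.ne', mul_one, sub_self] at hlim
  refine hlim.congr' ?_
  filter_upwards [eventually_gt_atTop 0, hψξ.eventually_ne one_ne_zero] with r hr hne
  have hξ0 := right_ne_zero_of_mul hne
  rw [(hψ.hasDerivAt_Theta hn0 hr).deriv, Theta, Pi.mul_apply]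
  field_simp

theorem tendsto_deriv_Theta_of_condA (hψ : IsCHModel ψ) (hn : 2 ≤ n) (h : CondA ψ) :
    Tendsto (deriv (Theta n ψ)) atTop (𝓝 0) := by
  obtain ⟨γ, ℓ, -, hγ, hℓ, hlim⟩ := h
  refine hψ.tendsto_deriv_Theta hn (ξ := fun r => r ^ γ / ℓ)
    (ξ' := fun r => γ * r ^ (γ - 1) / ℓ) ?_ ?_ ?_
  · filter_upwards [eventually_ne_atTop 0] with r hr
    exact (hasDerivAt_rpow_const (Or.inl hr)).div_const ℓ
  · have hpow : Tendsto (fun r : ℝ => r ^ (γ - 1)) atTop (𝓝 0) := by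
      simpa using tendsto_rpow_neg_atTop (sub_pos.2 hγ)
    simpa using (hpow.const_mul γ).div_const ℓ
  · have hone := hlim.div_const ℓ
    rw [div_self hℓ.ne'] at hone
    exact hone.congr fun r => by ring

theorem tendsto_deriv_Theta_of_condB (hψ : IsCHModel ψ) (hn : 2 ≤ n) (h : CondB ψ) :
    Tendsto (deriv (Theta n ψ)) atTop (𝓝 0) := by
  have hpos : ∀ r, 0 < r → 0 < deriv ψ r / ψ r := fun r hr =>
    div_pos (hψ.deriv_pos hr.le) (hψ.pos hr)
  refine hψ.tendsto_deriv_Theta hn (ξ := fun r => (deriv ψ r / ψ r)⁻¹) ?_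
    (neg_zero (G := ℝ) ▸ h.2.neg) ?_
  · filter_upwards [eventually_gt_atTop 0] with r hr
    have hm := ((hψ.hasDerivAt_deriv r).div (hψ.hasDerivAt r) (hψ.pos hr).ne')
    have hlog : deriv (fun s => log (deriv ψ s / ψ s)) r = _ := (hm.log (hpos r hr).ne').deriv
    have hψr := hψ.pos hr
    have hψ'r := hψ.deriv_pos hr.le
    refine (hm.inv (hpos r hr).ne').congr_deriv ?_
    rw [hlog, Pi.div_apply]
    field_simp
  · exact tendsto_const_nhds.congr' ((eventually_gt_atTop 0).mono fun r hr =>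
      (mul_inv_cancel₀ (hpos r hr).ne').symm)

end IsCHModel

theorem continuous_abs_rpow_mul_self {p : ℝ} (hp : 1 < p) :
    Continuous fun t : ℝ => |t| ^ (p - 2) * t := by
  have hp0 : p ≠ 0 := by linarith
  have hderiv : Continuous (deriv fun t : ℝ => ‖t‖ ^ p) :=
    (contDiff_norm_rpow hp).continuous_deriv le_rfl
  refine (hderiv.const_mul p⁻¹).congr fun t => ?_
  rw [(hasDerivAt_norm_rpow t hp).deriv, norm_eq_abs, mul_assoc, inv_mul_cancel_left₀ hp0]

/-- The flux `ψ ^ (n - 1) |u'| ^ (p - 2) u'` of a radial function `u`, whose derivative is the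
left-hand side of the radial equation. -/
noncomputable def radialFlux (n : ℕ) (p : ℝ) (ψ u : ℝ → ℝ) (r : ℝ) : ℝ :=
  ψ r ^ (n - 1) * |deriv u r| ^ (p - 2) * deriv u r

theorem continuousOn_radialFlux {n : ℕ} {p : ℝ} {ψ u : ℝ → ℝ} {s : Set ℝ} (hp : 1 < p)
    (hψ : ContinuousOn ψ s) (hu : ContinuousOn (deriv u) s) :
    ContinuousOn (radialFlux n p ψ u) s :=
  ((hψ.pow (n - 1)).mul ((continuous_abs_rpow_mul_self hp).comp_continuousOn hu)).congr
    fun _ _ => mul_assoc _ _ _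

theorem radialFlux_mul_deriv {n : ℕ} {p r : ℝ} {ψ u : ℝ → ℝ} (h : deriv u r ≠ 0) :
    radialFlux n p ψ u r * deriv u r = ψ r ^ (n - 1) * |deriv u r| ^ p := by
  rw [radialFlux, mul_assoc, mul_assoc, ← sq, ← sq_abs, ← rpow_two, ← rpow_add (abs_pos.2 h),
    sub_add_cancel]

theorem pohozaevP_eq (n : ℕ) (p q : ℝ) (ψ u : ℝ → ℝ) (r : ℝ) :
    pohozaevP n p q ψ u r = (∫ s in (0:ℝ)..r, ψ s ^ (n - 1)) * energyF p q u r +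
      radialFlux n p ψ u r * u r / (q + 1) := by
  rw [pohozaevP, radialFlux]
  ring

namespace IsRadialSolution

variable {n : ℕ} {p q α r : ℝ} {ψ u : ℝ → ℝ}

theorem u_pos (hu : IsRadialSolution n p q ψ ⊤ α u) (hr : 0 ≤ r) : 0 < u r :=
  hu.pos r hr ENNReal.ofReal_lt_top

theorem hasDerivAt (hu : IsRadialSolution n p q ψ ⊤ α u) (hr : 0 ≤ r) :
    HasDerivAt u (deriv u r) r :=
  (hu.diff r hr ENNReal.ofReal_lt_top).hasDerivAt

theorem continuousOn (hu : IsRadialSolution n p q ψ ⊤ α u) : ContinuousOn u (Set.Ici 0) :=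
  fun _ hr => (hu.hasDerivAt hr).continuousAt.continuousWithinAt

theorem continuousOn_deriv (hu : IsRadialSolution n p q ψ ⊤ α u) :
    ContinuousOn (deriv u) (Set.Ici 0) :=
  hu.deriv_cont.mono fun _ hr => ⟨hr, ENNReal.ofReal_lt_top⟩

theorem hasDerivAt_radialFlux (hu : IsRadialSolution n p q ψ ⊤ α u) (hr : 0 < r) :
    HasDerivAt (radialFlux n p ψ u) (-(ψ r ^ (n - 1) * u r ^ q)) r :=
  hu.eqn r hr ENNReal.ofReal_lt_top

theorem radialFlux_zero (hu : IsRadialSolution n p q ψ ⊤ α u) : radialFlux n p ψ u 0 = 0 := by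
  rw [radialFlux, hu.deriv_init, mul_zero]

theorem deriv_neg (hu : IsRadialSolution n p q ψ ⊤ α u) (hp : 1 < p) (hψ : IsCHModel ψ)
    (hr : 0 < r) : deriv u r < 0 := by
  have hanti : StrictAntiOn (radialFlux n p ψ u) (Set.Ici 0) := by
    refine strictAntiOn_of_deriv_neg (convex_Ici 0) (continuousOn_radialFlux hp
      hψ.continuous.continuousOn hu.continuousOn_deriv) fun s hs => ?_
    rw [interior_Ici] at hs
    rw [(hu.hasDerivAt_radialFlux hs).deriv, neg_lt_zero]
    exact mul_pos (pow_pos (hψ.pos hs) _) (rpow_pos_of_pos (hu.u_pos (le_of_lt hs)) _)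
  have hneg : radialFlux n p ψ u r < 0 := hu.radialFlux_zero ▸ hanti Set.self_mem_Ici hr.le hr
  exact neg_of_mul_neg_right hneg
    (mul_nonneg (pow_nonneg (hψ.pos hr).le _) (rpow_nonneg (abs_nonneg _) _))

theorem neg_radialFlux (hu : IsRadialSolution n p q ψ ⊤ α u) (hp : 1 < p) (hψ : IsCHModel ψ)
    (hr : 0 < r) : -radialFlux n p ψ u r = ψ r ^ (n - 1) * (-deriv u r) ^ (p - 1) := by
  have hneg := hu.deriv_neg hp hψ hr
  rw [radialFlux, abs_of_neg hneg, show p - 1 = p - 2 + 1 by ring,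
    rpow_add_one (neg_pos.2 hneg).ne']
  ring

theorem hasDerivAt_neg_deriv (hu : IsRadialSolution n p q ψ ⊤ α u) (hn : n ≠ 0) (hp : 1 < p)
    (hψ : IsCHModel ψ) (hr : 0 < r) :
    HasDerivAt (fun s => -deriv u s) (-deriv u r / (p - 1) *
      (u r ^ q / (-deriv u r) ^ (p - 1) - (n - 1) * (deriv ψ r / ψ r))) r := by
  have hp' : p - 1 ≠ 0 := (sub_pos.2 hp).ne'
  have hquot : ∀ s, 0 < s → -radialFlux n p ψ u s / ψ s ^ (n - 1) = (-deriv u s) ^ (p - 1) :=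
    fun s hs => by
      rw [hu.neg_radialFlux hp hψ hs, mul_div_cancel_left₀ _ (pow_pos (hψ.pos hs) _).ne']
  have hA := pow_pos (hψ.pos hr) (n - 1)
  have hw : 0 < -deriv u r := neg_pos.2 (hu.deriv_neg hp hψ hr)
  have hwp := rpow_pos_of_pos hw (p - 1)
  have hroot := ((hu.hasDerivAt_radialFlux hr).neg.div (hψ.hasDerivAt_area hn hr) hA.ne').rpow_const
    (p := 1 / (p - 1)) (Or.inl ((hquot r hr).trans_ne hwp.ne'))
  have heq : (fun s => -deriv u s) =ᶠ[𝓝 r]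
      fun s => (-radialFlux n p ψ u s / ψ s ^ (n - 1)) ^ (1 / (p - 1)) := by
    filter_upwards [eventually_gt_nhds hr] with s hs
    rw [hquot s hs, ← rpow_mul (neg_pos.2 (hu.deriv_neg hp hψ hs)).le, mul_one_div_cancel hp',
      rpow_one]
  refine (hroot.congr_of_eventuallyEq heq).congr_deriv ?_
  simp only [Pi.div_apply, Pi.neg_apply]
  rw [hquot r hr, hu.neg_radialFlux hp hψ hr, rpow_sub_one hwp.ne', ← rpow_mul hw.le,
    mul_one_div_cancel hp', rpow_one]
  field_simp

theorem isRadialFlowAt (hu : IsRadialSolution n p q ψ ⊤ α u) (hn : n ≠ 0) (hp : 1 < p)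
    (hψ : IsCHModel ψ) (hr : 0 < r) :
    IsRadialFlowAt p q (Theta n ψ) u (fun s => -deriv u s) r where
  theta_pos := hψ.Theta_pos n hr
  u_pos := hu.u_pos hr.le
  w_pos := neg_pos.2 (hu.deriv_neg hp hψ hr)
  differentiableAt_theta := (hψ.hasDerivAt_Theta hn hr).differentiableAt
  hasDerivAt_u := (neg_neg (deriv u r)).symm ▸ hu.hasDerivAt hr.le
  hasDerivAt_w := by
    refine (hu.hasDerivAt_neg_deriv hn hp hψ hr).congr_deriv ?_
    rw [(hψ.hasDerivAt_Theta hn hr).deriv, sub_sub_cancel,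
      mul_div_cancel_right₀ _ (hψ.Theta_pos n hr).ne']

theorem one_le_fluxRatio (hu : IsRadialSolution n p q ψ ⊤ α u) (hp : 1 < p) (hq : 0 ≤ q)
    (hψ : IsCHModel ψ) (hr : 0 < r) :
    1 ≤ fluxRatio p q (Theta n ψ) u (fun s => -deriv u s) r := by
  have hmono : MonotoneOn (fun r => -radialFlux n p ψ u r -
      (∫ s in (0:ℝ)..r, ψ s ^ (n - 1)) * u r ^ q) (Set.Ici 0) := by
    refine monotoneOn_Ici_of_hasDerivAt_nonneg
      ((continuousOn_radialFlux hp hψ.continuous.continuousOn hu.continuousOn_deriv).neg.sub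
        ((hψ.continuous_volume n).continuousOn.mul
          (hu.continuousOn.rpow_const fun _ _ => Or.inr hq)))
      (fun s hs => (hu.hasDerivAt_radialFlux hs).neg.sub ((hψ.hasDerivAt_volume n s).mul
        ((hu.hasDerivAt hs.le).rpow_const (Or.inl (hu.u_pos hs.le).ne')))) fun s hs => ?_
    have hdecr : (∫ t in (0:ℝ)..s, ψ t ^ (n - 1)) * (deriv u s * q * u s ^ (q - 1)) ≤ 0 :=
      mul_nonpos_of_nonneg_of_nonpos (hψ.volume_pos n hs).le (mul_nonpos_of_nonpos_of_nonneg
        (mul_nonpos_of_nonpos_of_nonneg (hu.deriv_neg hp hψ hs).le hq)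
        (rpow_nonneg (hu.u_pos hs.le).le _))
    linarith
  have hle := hmono Set.self_mem_Ici hr.le hr.le
  simp only [hu.radialFlux_zero, intervalIntegral.integral_same, hu.neg_radialFlux hp hψ hr,
    neg_zero, zero_mul, sub_zero, sub_nonneg] at hle
  rw [fluxRatio, one_le_div (mul_pos (hψ.Theta_pos n hr) (rpow_pos_of_pos (hu.u_pos hr.le) _)),
    Theta, div_mul_eq_mul_div, div_le_iff₀' (pow_pos (hψ.pos hr) _)]
  exact hle

theorem hasDerivAt_energyF (hu : IsRadialSolution n p q ψ ⊤ α u) (hn : n ≠ 0) (hp : 1 < p)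
    (hq : q ≠ -1) (hψ : IsCHModel ψ) (hr : 0 < r) :
    HasDerivAt (energyF p q u) (-((n - 1) * (deriv ψ r / ψ r) * |deriv u r| ^ p)) r := by
  have hw : 0 < -deriv u r := neg_pos.2 (hu.deriv_neg hp hψ hr)
  have hp0 : p ≠ 0 := by linarith
  have hp' : p - 1 ≠ 0 := (sub_pos.2 hp).ne'
  have hq' : q + 1 ≠ 0 := fun h => hq (eq_neg_of_add_eq_zero_left h)
  have habs : energyF p q u =ᶠ[𝓝 r]
      fun s => (p - 1) / p * (-deriv u s) ^ p + u s ^ (q + 1) / (q + 1) := by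
    filter_upwards [eventually_gt_nhds hr] with s hs
    rw [energyF, abs_of_neg (hu.deriv_neg hp hψ hs)]
  refine (((((hu.hasDerivAt_neg_deriv hn hp hψ hr).rpow_const (Or.inl hw.ne')).const_mul _).add
    (((hu.hasDerivAt hr.le).rpow_const (Or.inl (hu.u_pos hr.le).ne')).div_const _)
    ).congr_of_eventuallyEq habs).congr_deriv ?_
  rw [abs_of_neg (neg_pos.1 hw), add_sub_cancel_right, ← sub_add_cancel p 1, rpow_add_one hw.ne',
    sub_add_cancel]
  field_simp
  ring

theorem hasDerivAt_pohozaevP (hu : IsRadialSolution n p q ψ ⊤ α u) (hn : n ≠ 0) (hp : 1 < p)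
    (hq : q ≠ -1) (hψ : IsCHModel ψ) (hr : 0 < r) :
    HasDerivAt (pohozaevP n p q ψ u) (Kfun n p q ψ r * |deriv u r| ^ p) r := by
  rw [funext (pohozaevP_eq n p q ψ u)]
  refine (((hψ.hasDerivAt_volume n r).mul (hu.hasDerivAt_energyF hn hp hq hψ hr)).add
    (((hu.hasDerivAt_radialFlux hr).mul (hu.hasDerivAt hr.le)).div_const (q + 1))).congr_deriv ?_
  rw [radialFlux_mul_deriv (hu.deriv_neg hp hψ hr).ne, Kfun, energyF,
    rpow_add_one (hu.u_pos hr.le).ne']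
  ring

theorem pohozaevP_nonpos (hu : IsRadialSolution n p q ψ ⊤ α u) (hn : n ≠ 0) (hp : 1 < p)
    (hq : -1 < q) (hpq : (p - 1) / p + 1 / (q + 1) ≤ ((n : ℝ) - 1) / n) (hψ : IsCHModel ψ)
    (hr : 0 ≤ r) : pohozaevP n p q ψ u r ≤ 0 := by
  have hcont : ContinuousOn (pohozaevP n p q ψ u) (Set.Ici 0) := by
    rw [funext (pohozaevP_eq n p q ψ u)]
    have hF : ContinuousOn (energyF p q u) (Set.Ici 0) :=
      (continuousOn_const.mul (hu.continuousOn_deriv.abs.rpow_const fun _ _ =>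
        Or.inr (by linarith))).add
        ((hu.continuousOn.rpow_const fun _ _ => Or.inr (by linarith)).div_const _)
    exact ((hψ.continuous_volume n).continuousOn.mul hF).add (((continuousOn_radialFlux hp
      hψ.continuous.continuousOn hu.continuousOn_deriv).mul hu.continuousOn).div_const _)
  have hmono : MonotoneOn (-pohozaevP n p q ψ u) (Set.Ici 0) :=
    monotoneOn_Ici_of_hasDerivAt_nonneg hcont.neg
      (fun s hs => (hu.hasDerivAt_pohozaevP hn hp hq.ne' hψ hs).neg) fun s hs =>
        neg_nonneg.2 (mul_nonpos_of_nonpos_of_nonneg (hψ.Kfun_nonpos hn hpq hs)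
          (rpow_nonneg (abs_nonneg _) _))
  have hzero : pohozaevP n p q ψ u 0 = 0 := by
    rw [pohozaevP, hu.deriv_init, intervalIntegral.integral_same]
    ring
  have hle := hmono Set.self_mem_Ici hr hr
  rwa [Pi.neg_apply, Pi.neg_apply, hzero, neg_zero, neg_nonneg] at hle

theorem logSlope_le (hu : IsRadialSolution n p q ψ ⊤ α u) (hn : n ≠ 0) (hp : 1 < p)
    (hq : -1 < q) (hpq : (p - 1) / p + 1 / (q + 1) ≤ ((n : ℝ) - 1) / n) (hψ : IsCHModel ψ)
    (hr : 0 < r) :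
    logSlope (Theta n ψ) u (fun s => -deriv u s) r ≤ p / ((p - 1) * (q + 1)) := by
  have hw : 0 < -deriv u r := neg_pos.2 (hu.deriv_neg hp hψ hr)
  have hwp := rpow_pos_of_pos hw (p - 1)
  have hA := pow_pos (hψ.pos hr) (n - 1)
  have hV := hψ.volume_pos n hr
  have hur := hu.u_pos hr.le
  have hq' : 0 < q + 1 := by linarith
  have hkinetic : (∫ s in (0:ℝ)..r, ψ s ^ (n - 1)) * ((p - 1) / p * (-deriv u r) ^ p) ≤
      ψ r ^ (n - 1) * (-deriv u r) ^ (p - 1) * u r / (q + 1) := by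
    have hP := hu.pohozaevP_nonpos hn hp hq hpq hψ hr.le
    have hpot := mul_pos hV (div_pos (rpow_pos_of_pos hur (q + 1)) hq')
    rw [pohozaevP_eq, energyF, abs_of_neg (neg_pos.1 hw)] at hP
    rw [← hu.neg_radialFlux hp hψ hr, neg_mul, neg_div]
    linarith
  rw [show (-deriv u r) ^ p = (-deriv u r) ^ (p - 1) * -deriv u r by
    rw [← rpow_add_one hw.ne', sub_add_cancel]] at hkinetic
  rw [logSlope, Theta, div_mul_eq_mul_div, div_div, div_le_div_iff₀ (by positivity)
    (mul_pos (sub_pos.2 hp) hq')]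
  refine le_of_mul_le_mul_right ?_ hwp
  have hclear := mul_le_mul_of_nonneg_left hkinetic (show 0 ≤ p * (q + 1) by positivity)
  field_simp at hclear ⊢
  linarith

end IsRadialSolution

section SobolevExponent

variable {N p q : ℝ}

theorem lt_add_one_of_sobolev_le (hp : 0 < p) (hpN : p < N) (hq : N * p / (N - p) - 1 ≤ q) :
    p < q + 1 := by
  have hlt : p < N * p / (N - p) := by
    rw [lt_div_iff₀ (sub_pos.2 hpN)]
    nlinarith
  linarith

theorem sub_one_div_add_one_div_le_of_sobolev_le (hp : 0 < p) (hpN : p < N)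
    (hq : N * p / (N - p) - 1 ≤ q) : (p - 1) / p + 1 / (q + 1) ≤ (N - 1) / N := by
  have hN : 0 < N := hp.trans hpN
  calc (p - 1) / p + 1 / (q + 1) ≤ (p - 1) / p + 1 / (N * p / (N - p)) := by
        gcongr
        linarith
    _ = (N - 1) / N := by
        field_simp
        ring

end SobolevExponent

theorem statement_17_general (n : ℕ) (p q : ℝ) (hp1 : 1 < p) (hpn : p < n)
    (hq : (n : ℝ) * p / ((n : ℝ) - p) - 1 ≤ q) (ψ : ℝ → ℝ) (hψ : IsCHModel ψ)
    (hpc : Tendsto (fun r : ℝ => ∫ s in (0:ℝ)..r, Theta n ψ s ^ (1 / (p - 1))) atTop atTop)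
    (hΘ : ∀ ε > 0, ∀ᶠ r in atTop, deriv (Theta n ψ) r ≤ ε) (α : ℝ) (u : ℝ → ℝ)
    (hu : IsRadialSolution n p q ψ ⊤ α u) :
    Tendsto (fun r : ℝ =>
        (∫ s in (0:ℝ)..r, Theta n ψ s ^ (1 / (p - 1))) ^ ((p - 1) / (q + 1 - p)) * u r) atTop
      (𝓝 (((p - 1) / (q + 1 - p)) ^ ((p - 1) / (q + 1 - p)))) := by
  have hp0 : 0 < p := one_pos.trans hp1
  have hp' : 0 < p - 1 := sub_pos.2 hp1
  have hn : n ≠ 0 := by exact_mod_cast (hp0.trans hpn).ne'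
  have hqp : p < q + 1 := lt_add_one_of_sobolev_le hp0 hpn hq
  have hq0 : 0 < q := by linarith
  have hsob := sub_one_div_add_one_div_le_of_sobolev_le hp0 hpn hq
  have hB : p / ((p - 1) * (q + 1)) < 1 / (p - 1) := by
    rw [div_lt_div_iff₀ (by positivity) hp', one_mul, mul_comm (p - 1)]
    gcongr
  have hpos := eventually_gt_atTop (0 : ℝ)
  have hflow := hpos.mono fun r hr => hu.isRadialFlowAt hn hp1 hψ hr
  have hH := hpos.mono fun r hr =>
    hψ.hasDerivAt_integral_Theta_rpow n (one_div_nonneg.2 hp'.le) hr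
  have hR := hpos.mono fun r hr => hu.one_le_fluxRatio hp1 hq0.le hψ hr
  have hX := hpos.mono fun r hr => hu.logSlope_le hn hp1 (by linarith) hsob hψ hr
  have hX_lim := tendsto_logSlope hp1 hB hflow hΘ
    (tendsto_theta_rpow_mul_rpow hp1 hqp hflow hΘ hH hpc hR) hX
  exact tendsto_rpow_mul_of_tendsto_fluxRatio hp1 hqp hflow hH hpc
    (tendsto_fluxRatio hp1.ne' hq0 hflow (hpos.mono fun r hr => hψ.Theta_le_self n hr) hR hX_lim)

/-- the precise asymptotics
`(∫₀ʳ Θ^{1/(p-1)})^{(p-1)/(q+1-p)} u(r) → ((p-1)/(q+1-p))^{(p-1)/(q+1-p)}`. -/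
theorem statement_17 (n : ℕ) (hn : 2 ≤ n) (p q : ℝ) (hp1 : 1 < p) (hpn : p < n)
    (hq : (n : ℝ) * p / ((n : ℝ) - p) - 1 ≤ q)
    (ψ : ℝ → ℝ) (hψ : IsCHModel ψ)
    (hpc : Tendsto (fun r : ℝ => ∫ s in (0:ℝ)..r, Theta n ψ s ^ (1 / (p - 1)))
      atTop atTop)
    (hcond : CondA ψ ∨ CondB ψ)
    (α : ℝ) (hα : 0 < α)
    (u : ℝ → ℝ) (hu : IsRadialSolution n p q ψ ⊤ α u) :
    Tendsto (fun r : ℝ =>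
        (∫ s in (0:ℝ)..r, Theta n ψ s ^ (1 / (p - 1))) ^ ((p - 1) / (q + 1 - p)) *
          u r) atTop
      (nhds (((p - 1) / (q + 1 - p)) ^ ((p - 1) / (q + 1 - p)))) := by
  have hΘ := hcond.elim (hψ.tendsto_deriv_Theta_of_condA hn) (hψ.tendsto_deriv_Theta_of_condB hn)
  exact statement_17_general n p q hp1 hpn hq ψ hψ hpc (fun _ hε => hΘ.eventually_le_const hε)
    α u hu
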